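/- Autocorrelation of the dense Dirac comb: under the dense cut-and-project hypotheses with f : ℝ^m → ℂ continuous and |x|^{m+1+α}|f(x)| ≤ C, the finite autocorrelation measures γ_ω^{(n)} = (1/vol(B_n)) ω_n ∗ ω̃_n converge vaguely to the unique measure γ_ω = ∑_{z ∈ L} η(z) δ_z with η(z) = (1/|det(L̃)|) ∫_{ℝ^m} f(u) conj(f(u − z*)) du, and γ_ω is a translation-bounded, positive definite, pure point measure. -/

import Mathlib

open MeasureTheory Metric

/-- The projection of the lattice to direct space. -/
def physL (d m : ℕ) (L : Submodule ℤ (EuclideanSpace ℝ (Fin d) × EuclideanSpace ℝ (Fin m))) :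
    Set (EuclideanSpace ℝ (Fin d)) :=
  Prod.fst '' (L : Set (EuclideanSpace ℝ (Fin d) × EuclideanSpace ℝ (Fin m)))

/-- The finite autocorrelation coefficient η_n(z) of the dense weighted Dirac comb. -/
noncomputable def etaN (d m : ℕ)
    (L : Submodule ℤ (EuclideanSpace ℝ (Fin d) × EuclideanSpace ℝ (Fin m)))
    (star : EuclideanSpace ℝ (Fin d) → EuclideanSpace ℝ (Fin m))
    (f : EuclideanSpace ℝ (Fin m) → ℂ) (n : ℕ) (z : EuclideanSpace ℝ (Fin d)) : ℂ :=
  (volume (closedBall (0 : EuclideanSpace ℝ (Fin d)) n)).toReal⁻¹ •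
    ∑' x : (({x | x ∈ physL d m L ∧ x ∈ closedBall (0 : EuclideanSpace ℝ (Fin d)) n ∧
          x - z ∈ physL d m L ∧ x - z ∈ closedBall (0 : EuclideanSpace ℝ (Fin d)) n} :
        Set (EuclideanSpace ℝ (Fin d)))),
      f (star (x : EuclideanSpace ℝ (Fin d))) *
        (starRingEnd ℂ) (f (star ((x : EuclideanSpace ℝ (Fin d)) - z)))

/-- The limiting autocorrelation coefficient η(z). -/
noncomputable def etaLim (d m : ℕ)
    (L : Submodule ℤ (EuclideanSpace ℝ (Fin d) × EuclideanSpace ℝ (Fin m)))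
    (star : EuclideanSpace ℝ (Fin d) → EuclideanSpace ℝ (Fin m))
    (f : EuclideanSpace ℝ (Fin m) → ℂ) (z : EuclideanSpace ℝ (Fin d)) : ℂ :=
  (ZLattice.covolume L volume)⁻¹ • ∫ u, f u * (starRingEnd ℂ) (f (u - star z))

/-!
Functions on internal space are dominated by the weight `(1 + ‖u‖) ^ (-s)` with `s > m`. This
weight is integrable, and comparing sums with integrals over lattice cells shows that the lattice
points above a region `A` of direct space carry total weight `O(vol A)` (up to thickening `A` by
the diameter of a cell), uniformly in all translates of the lattice; the points above the boundary
of a large ball are therefore negligible.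

For such a function `φ`, let `M_R(w)` be the sum of `φ` over the points of `L + w` above the ball of
radius `R`, divided by the volume of the ball. Since `M_R` is `L`-periodic and the internal
projection of `L` is dense, `w` may be moved by a lattice vector until its internal part is tiny, so
`M_R(w) - M_R(0) → 0`. But the integral of `M_R` over a fundamental domain is exactly `∫ φ`, hence
`M_R(0) → covol(L)⁻¹ ∫ φ`. For `φ u = f u * conj (f (u - z*))` this limit is `η(z)`, and `M_R(0)`
differs from the finite coefficient at `z` by boundary terms only.

Since one of `u`, `u - v` has norm at least `‖v‖ / 2`, the finite coefficients are bounded by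
`B (1 + ‖z*‖) ^ (-s)` uniformly in the radius. This bound is summable above bounded sets, which
gives both vague convergence (by dominated convergence) and translation boundedness. Positive
definiteness passes to the limit from the finite autocorrelations.
-/

section

open Filter Topology Bornology
open scoped ENNReal ComplexConjugate ComplexOrder

section DecayWeight

variable {H : Type*} [NormedAddCommGroup H] {s : ℝ}

/-- The weight `(1 + ‖u‖) ^ (-s)` on internal space, against which all functions on internal space
are measured. It is integrable as soon as `s` exceeds the dimension. -/
noncomputable def decayWeight (s : ℝ) (u : H) : ℝ :=
  (1 + ‖u‖) ^ (-s)

lemma decayWeight_pos (s : ℝ) (u : H) : 0 < decayWeight s u :=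
  Real.rpow_pos_of_pos (by positivity) _

lemma decayWeight_nonneg (s : ℝ) (u : H) : 0 ≤ decayWeight s u :=
  (decayWeight_pos s u).le

lemma decayWeight_le_one (hs : 0 ≤ s) (u : H) : decayWeight s u ≤ 1 :=
  Real.rpow_le_one_of_one_le_of_nonpos (by linarith [norm_nonneg u]) (by linarith)

lemma decayWeight_le_rpow_mul (hs : 0 ≤ s) {c : ℝ} (hc : 0 ≤ c) {u v : H}
    (h : 1 + ‖v‖ ≤ c * (1 + ‖u‖)) : decayWeight s u ≤ c ^ s * decayWeight s v := by
  have hpow : (1 + ‖v‖) ^ s ≤ c ^ s * (1 + ‖u‖) ^ s := by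
    rw [← Real.mul_rpow hc (by positivity)]
    exact Real.rpow_le_rpow (by positivity) h hs
  unfold decayWeight
  rwa [Real.rpow_neg (by positivity), Real.rpow_neg (by positivity), ← div_eq_mul_inv,
    inv_eq_one_div, div_le_div_iff₀ (by positivity) (by positivity), one_mul]

lemma decayWeight_le_of_norm_sub_le (hs : 0 ≤ s) {r : ℝ} {u v : H} (h : ‖v - u‖ ≤ r) :
    decayWeight s u ≤ (1 + r) ^ s * decayWeight s v := by
  have hr : 0 ≤ r := (norm_nonneg _).trans h
  refine decayWeight_le_rpow_mul hs (by positivity) ?_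
  have hv : ‖v‖ ≤ ‖u‖ + ‖v - u‖ := norm_le_norm_add_norm_sub' v u
  nlinarith [mul_nonneg hr (norm_nonneg u)]

lemma decayWeight_mul_decayWeight_sub_le (hs : 0 ≤ s) (u v : H) :
    decayWeight s u * decayWeight s (u - v) ≤
      2 ^ s * decayWeight s v * (decayWeight s u + decayWeight s (u - v)) := by
  have hu := decayWeight_nonneg s u
  have huv := decayWeight_nonneg s (u - v)
  have hc : 0 ≤ 2 ^ s * decayWeight s v := mul_nonneg (by positivity) (decayWeight_nonneg s v)
  have hv : ‖v‖ ≤ ‖u‖ + ‖u - v‖ := by simpa using norm_sub_le u (u - v)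
  -- One of `u` and `u - v` has norm at least `‖v‖ / 2`.
  rcases le_total ‖u‖ ‖u - v‖ with h | h
  · have hle : decayWeight s (u - v) ≤ 2 ^ s * decayWeight s v :=
      decayWeight_le_rpow_mul hs zero_le_two (by linarith)
    nlinarith [mul_nonneg hc huv]
  · have hle : decayWeight s u ≤ 2 ^ s * decayWeight s v :=
      decayWeight_le_rpow_mul hs zero_le_two (by linarith)
    nlinarith [mul_nonneg hc hu]

lemma tendsto_decayWeight_cocompact [ProperSpace H] (hs : 0 < s) :
    Tendsto (decayWeight s : H → ℝ) (cocompact H) (𝓝 0) :=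
  (tendsto_rpow_neg_atTop hs).comp
    (tendsto_atTop_add_const_left _ _ (tendsto_norm_cocompact_atTop (E := H)))

variable {G : Type*} [SeminormedAddCommGroup G] {f : H → G} {C : ℝ}

lemma exists_norm_le_mul_decayWeight [ProperSpace H] (hs : 0 ≤ s) (hf : Continuous f)
    (hdecay : ∀ x, ‖x‖ ^ s * ‖f x‖ ≤ C) :
    ∃ C', 0 ≤ C' ∧ ∀ x, ‖f x‖ ≤ C' * decayWeight s x := by
  obtain ⟨B, hB⟩ := (isCompact_closedBall (0 : H) 1).exists_bound_of_continuousOn hf.continuousOn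
  have hB₀ : 0 ≤ B := (norm_nonneg _).trans (hB 0 (by simp))
  have hC₀ : 0 ≤ C := le_trans (by positivity) (hdecay 0)
  refine ⟨2 ^ s * (B + C), by positivity, fun x => ?_⟩
  have hbound : (max 1 ‖x‖) ^ s * ‖f x‖ ≤ B + C := by
    rcases le_total ‖x‖ 1 with h | h
    · rw [max_eq_left h, Real.one_rpow, one_mul]
      linarith [hB x (by simpa using h)]
    · rw [max_eq_right h]
      linarith [hdecay x]
  have hmax : (1 + ‖x‖) ^ s ≤ 2 ^ s * (max 1 ‖x‖) ^ s := by
    rw [← Real.mul_rpow zero_le_two (by positivity)]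
    refine Real.rpow_le_rpow (by positivity) ?_ hs
    linarith [le_max_left 1 ‖x‖, le_max_right 1 ‖x‖]
  rw [decayWeight, Real.rpow_neg (by positivity), ← div_eq_mul_inv, le_div_iff₀ (by positivity)]
  calc ‖f x‖ * (1 + ‖x‖) ^ s ≤ ‖f x‖ * (2 ^ s * (max 1 ‖x‖) ^ s) := by gcongr
    _ = 2 ^ s * ((max 1 ‖x‖) ^ s * ‖f x‖) := by ring
    _ ≤ 2 ^ s * (B + C) := by gcongr

lemma uniformContinuous_of_norm_le_decayWeight [ProperSpace H] (hs : 0 < s) (hf : Continuous f)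
    (hfC : ∀ x, ‖f x‖ ≤ C * decayWeight s x) : UniformContinuous f := by
  have hlim : Tendsto (fun x => C * decayWeight s x) (cocompact H) (𝓝 0) := by
    simpa using (tendsto_decayWeight_cocompact hs).const_mul C
  exact hf.uniformContinuous_of_tendsto_cocompact (squeeze_zero_norm hfC hlim)

/-- Uniform continuity with a modulus that decays like `decayWeight s`, so that the variation of
`φ` under a small translation remains summable along a strip of the lattice. -/
def WeightedUniformContinuous (s : ℝ) (φ : H → G) : Prop :=
  ∀ ε > 0, ∃ δ > 0, ∀ v, ‖v‖ < δ → ∀ u, ‖φ (u + v) - φ u‖ ≤ ε * decayWeight s u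

lemma weightedUniformContinuous_mul {R : Type*} [NonUnitalSeminormedRing R] {φ ψ : H → R}
    {A B : ℝ} (hs : 0 ≤ s) (hφ : UniformContinuous φ) (hψ : UniformContinuous ψ)
    (hφA : ∀ u, ‖φ u‖ ≤ A * decayWeight s u) (hψB : ∀ u, ‖ψ u‖ ≤ B * decayWeight s u) :
    WeightedUniformContinuous s fun u => φ u * ψ u := by
  have hA : 0 ≤ A := nonneg_of_mul_nonneg_left ((norm_nonneg _).trans (hφA 0)) (decayWeight_pos s 0)
  have hB : 0 ≤ B := nonneg_of_mul_nonneg_left ((norm_nonneg _).trans (hψB 0)) (decayWeight_pos s 0)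
  intro ε hε
  set M : ℝ := A * 2 ^ s + B + 1 with hM
  have hM₀ : 0 < M := by positivity
  obtain ⟨δ₁, hδ₁, hφδ⟩ := Metric.uniformContinuous_iff.1 hφ (ε / M) (by positivity)
  obtain ⟨δ₂, hδ₂, hψδ⟩ := Metric.uniformContinuous_iff.1 hψ (ε / M) (by positivity)
  refine ⟨min 1 (min δ₁ δ₂), by positivity, fun v hv u => ?_⟩
  obtain ⟨hv₁, hvφ, hvψ⟩ : ‖v‖ < 1 ∧ ‖v‖ < δ₁ ∧ ‖v‖ < δ₂ := by simpa only [lt_min_iff] using hv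
  have hφuv : ‖φ (u + v) - φ u‖ ≤ ε / M := by
    rw [← dist_eq_norm]
    exact (hφδ (by simpa using hvφ)).le
  have hψuv : ‖ψ (u + v) - ψ u‖ ≤ ε / M := by
    rw [← dist_eq_norm]
    exact (hψδ (by simpa using hvψ)).le
  have hφshift : ‖φ (u + v)‖ ≤ A * (2 ^ s * decayWeight s u) := by
    refine (hφA _).trans (mul_le_mul_of_nonneg_left ?_ hA)
    have h := decayWeight_le_of_norm_sub_le (r := 1) (u := u + v) (v := u) hs
      (by simpa using hv₁.le)
    rwa [one_add_one_eq_two] at h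
  have hw := decayWeight_nonneg s u
  calc ‖φ (u + v) * ψ (u + v) - φ u * ψ u‖
      = ‖φ (u + v) * (ψ (u + v) - ψ u) + (φ (u + v) - φ u) * ψ u‖ := by
        rw [mul_sub, sub_mul, sub_add_sub_cancel]
    _ ≤ ‖φ (u + v)‖ * ‖ψ (u + v) - ψ u‖ + ‖φ (u + v) - φ u‖ * ‖ψ u‖ :=
        (norm_add_le _ _).trans (add_le_add (norm_mul_le _ _) (norm_mul_le _ _))
    _ ≤ A * (2 ^ s * decayWeight s u) * (ε / M) + ε / M * (B * decayWeight s u) := by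
        gcongr
        exact hψB u
    _ = (M - 1) * (ε / M) * decayWeight s u := by rw [hM]; ring
    _ ≤ M * (ε / M) * decayWeight s u := by gcongr; linarith
    _ = ε * decayWeight s u := by rw [mul_div_cancel₀ _ hM₀.ne']

variable {f : H → ℂ}

lemma norm_mul_conj_sub_le (hs : 0 ≤ s) (hC : 0 ≤ C) (hfC : ∀ u, ‖f u‖ ≤ C * decayWeight s u)
    (v u : H) : ‖f u * conj (f (u - v))‖ ≤ C * C * decayWeight s u := by
  have hw := decayWeight_nonneg s u
  have hbdd : ‖f (u - v)‖ ≤ C :=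
    (hfC _).trans (mul_le_of_le_one_right hC (decayWeight_le_one hs _))
  rw [norm_mul, RCLike.norm_conj]
  calc ‖f u‖ * ‖f (u - v)‖ ≤ C * decayWeight s u * C := by gcongr; exact hfC u
    _ = C * C * decayWeight s u := by ring

lemma weightedUniformContinuous_mul_conj_sub [ProperSpace H] (hs : 0 < s) (hC : 0 ≤ C)
    (hf : Continuous f) (hfC : ∀ u, ‖f u‖ ≤ C * decayWeight s u) (v : H) :
    WeightedUniformContinuous s fun u => f u * conj (f (u - v)) := by
  have hfu := uniformContinuous_of_norm_le_decayWeight hs hf hfC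
  have hconj : UniformContinuous fun u => conj (f (u - v)) :=
    Complex.isometry_conj.uniformContinuous.comp
      (hfu.comp (uniformContinuous_id.sub uniformContinuous_const))
  refine weightedUniformContinuous_mul hs.le hfu hconj hfC
    (B := C * (1 + ‖v‖) ^ s) fun u => ?_
  rw [RCLike.norm_conj, mul_assoc]
  exact (hfC _).trans
    (mul_le_mul_of_nonneg_left (decayWeight_le_of_norm_sub_le hs.le (by simp)) hC)

end DecayWeight

section Balls

variable {E : Type*} [NormedAddCommGroup E]

/-- The shell of points at distance at most `a` from the sphere of radius `R` (up to its inner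
boundary); it contains every point of the ball of radius `R` that leaves this ball under a
translation of length at most `a`. -/
def sphereShell (E : Type*) [NormedAddCommGroup E] (R a : ℝ) : Set E :=
  closedBall 0 (R + a) \ closedBall 0 (R - a)

lemma isBounded_sphereShell (R a : ℝ) : IsBounded (sphereShell E R a) :=
  isBounded_closedBall.subset Set.sdiff_subset

lemma mem_sphereShell_of_mem_of_add_notMem {R : ℝ} {x t : E} (hx : x ∈ closedBall 0 R)
    (hxt : x + t ∉ closedBall 0 R) : x ∈ sphereShell E R ‖t‖ := by
  have htri := norm_add_le x t
  simp only [sphereShell, Set.mem_sdiff, mem_closedBall, dist_zero_right, not_le] at hx hxt ⊢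
  constructor <;> linarith [norm_nonneg t]

lemma closedBall_subset_sphereShell_add {R a r : ℝ} {x : E} (hx : x ∈ sphereShell E R a) :
    closedBall x r ⊆ sphereShell E R (a + r) := by
  intro y hy
  rw [mem_closedBall, dist_eq_norm] at hy
  have hyx : ‖y‖ ≤ ‖x‖ + ‖y - x‖ := norm_le_norm_add_norm_sub' y x
  have hxy : ‖x‖ ≤ ‖y‖ + ‖y - x‖ := norm_le_norm_add_norm_sub y x
  simp only [sphereShell, Set.mem_sdiff, mem_closedBall, dist_zero_right, not_le] at hx ⊢
  constructor <;> linarith [hx.1, hx.2]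

variable [NormedSpace ℝ E] [FiniteDimensional ℝ E] [MeasurableSpace E] (μ : Measure E)
  [μ.IsAddHaarMeasure]

lemma measureReal_closedBall_pos {R : ℝ} (hR : 0 < R) : 0 < μ.real (closedBall 0 R) :=
  ENNReal.toReal_pos (measure_closedBall_pos μ _ hR).ne' measure_closedBall_lt_top.ne

variable [BorelSpace E]

lemma tendsto_inv_mul_measureReal_closedBall_add (b : ℝ) :
    Tendsto (fun R : ℝ => (μ.real (closedBall 0 R))⁻¹ * μ.real (closedBall 0 (R + b))) atTop
      (𝓝 1) := by
  have hpow : Tendsto (fun R : ℝ => (1 + b / R) ^ Module.finrank ℝ E) atTop (𝓝 1) := by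
    simpa using ((tendsto_const_nhds (x := b)).div_atTop
      (tendsto_id (α := ℝ))).const_add 1 |>.pow (Module.finrank ℝ E)
  refine hpow.congr' ?_
  filter_upwards [eventually_gt_atTop 0, eventually_ge_atTop (-b)] with R hR hb
  have hunit := (measureReal_closedBall_pos μ one_pos).ne'
  rw [Measure.addHaar_real_closedBall' μ 0 hR.le,
    Measure.addHaar_real_closedBall' μ 0 (by linarith : 0 ≤ R + b),
    show 1 + b / R = (R + b) / R by field_simp, div_pow]
  field_simp

lemma tendsto_inv_mul_measureReal_sphereShell {a : ℝ} (ha : 0 ≤ a) :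
    Tendsto (fun R : ℝ => (μ.real (closedBall 0 R))⁻¹ * μ.real (sphereShell E R a)) atTop
      (𝓝 0) := by
  have hlim := (tendsto_inv_mul_measureReal_closedBall_add μ a).sub
    (tendsto_inv_mul_measureReal_closedBall_add μ (-a))
  rw [sub_self] at hlim
  refine hlim.congr fun R => ?_
  rw [← mul_sub, ← sub_eq_add_neg, sphereShell,
    measureReal_sdiff (closedBall_subset_closedBall (by linarith)) measurableSet_closedBall
      measure_closedBall_lt_top.ne]

end Balls

section Periodization

variable {V G : Type*} [NormedAddCommGroup V] [NormedAddCommGroup G] (L : Submodule ℤ V)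

/-- The sum of the translates of `F` along the lattice `L`. -/
noncomputable def periodization (F : V → G) (w : V) : G :=
  ∑' q : L, F (q + w)

lemma periodization_sub_of_mem {l : V} (hl : l ∈ L) (F : V → G) (w : V) :
    periodization L F (w - l) = periodization L F w := by
  rw [periodization, ← (Equiv.addRight (⟨l, hl⟩ : L)).tsum_eq]
  exact tsum_congr fun q => congrArg F (add_add_sub_cancel _ _ _)

lemma summable_and_tsum_le_of_tsum_ofReal_le {ι : Type*} {a : ι → ℝ} {b : ℝ} (ha : ∀ i, 0 ≤ a i)
    (hb : 0 ≤ b) (hab : ∑' i, ENNReal.ofReal (a i) ≤ ENNReal.ofReal b) :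
    Summable a ∧ ∑' i, a i ≤ b := by
  have hsum (S : Finset ι) : ∑ i ∈ S, a i ≤ b := by
    rw [← ENNReal.ofReal_le_ofReal_iff hb, ENNReal.ofReal_sum_of_nonneg fun i _ => ha i]
    exact (ENNReal.sum_le_tsum S).trans hab
  exact ⟨summable_of_sum_le ha hsum, Real.tsum_le_of_sum_le ha hsum⟩

variable [NormedSpace ℝ V] [FiniteDimensional ℝ V] [MeasurableSpace V] [BorelSpace V]
  [DiscreteTopology L] [IsZLattice ℝ L]

lemma exists_isBounded_isAddFundamentalDomain (μ : Measure V) [μ.IsAddHaarMeasure] :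
    ∃ D : Set V, IsBounded D ∧ MeasurableSet D ∧ IsAddFundamentalDomain L D μ := by
  have := ZLattice.module_finite ℝ L
  have := ZLattice.module_free ℝ L
  let b := Module.Free.chooseBasis ℤ L
  exact ⟨ZSpan.fundamentalDomain (b.ofZLatticeBasis ℝ), ZSpan.fundamentalDomain_isBounded _,
    ZSpan.fundamentalDomain_measurableSet _, ZLattice.isAddFundamentalDomain b μ⟩

variable {L} {μ : Measure V} [μ.IsAddHaarMeasure] {D : Set V}

lemma lintegral_eq_tsum_setLIntegral_add (hD : IsAddFundamentalDomain L D μ) (F : V → ℝ≥0∞) :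
    ∫⁻ y, F y ∂μ = ∑' q : L, ∫⁻ y in D, F (q + y) ∂μ := by
  have : VAddInvariantMeasure L V μ := inferInstanceAs (VAddInvariantMeasure L.toAddSubgroup V μ)
  have : MeasurableConstVAdd L V := inferInstanceAs (MeasurableConstVAdd L.toAddSubgroup V)
  exact hD.lintegral_eq_tsum'' F

lemma integral_eq_tsum_setIntegral_add [NormedSpace ℝ G] (hD : IsAddFundamentalDomain L D μ)
    {F : V → G} (hF : Integrable F μ) : ∫ y, F y ∂μ = ∑' q : L, ∫ y in D, F (q + y) ∂μ := by
  have : VAddInvariantMeasure L V μ := inferInstanceAs (VAddInvariantMeasure L.toAddSubgroup V μ)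
  have : MeasurableConstVAdd L V := inferInstanceAs (MeasurableConstVAdd L.toAddSubgroup V)
  exact hD.integral_eq_tsum'' F hF

lemma summable_and_periodization_le_of_le_add (hD : IsAddFundamentalDomain L D μ)
    (hDm : MeasurableSet D) (hDμ : 0 < μ.real D) {F Φ : V → ℝ} (hF : ∀ y, 0 ≤ F y)
    (hΦ : ∀ y, 0 ≤ Φ y) (hΦi : Integrable Φ μ) (hFΦ : ∀ y, ∀ x ∈ D, F y ≤ Φ (y + x)) (w : V) :
    (Summable fun q : L => F (q + w)) ∧ periodization L F w ≤ (μ.real D)⁻¹ * ∫ y, Φ y ∂μ := by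
  have hDfin : μ D ≠ ⊤ := fun h => by simp [Measure.real, h] at hDμ
  refine summable_and_tsum_le_of_tsum_ofReal_le (fun q => hF _)
    (mul_nonneg (inv_nonneg.2 hDμ.le) (integral_nonneg hΦ)) ?_
  have hcell (q : L) : ENNReal.ofReal (F (q + w)) * μ D ≤
      ∫⁻ x in D, ENNReal.ofReal (Φ (q + x + w)) ∂μ := by
    rw [← setLIntegral_const]
    refine setLIntegral_mono' hDm fun x hx => ENNReal.ofReal_le_ofReal ?_
    rw [add_right_comm]
    exact hFΦ _ x hx
  have htotal : (∑' q : L, ENNReal.ofReal (F (q + w))) * μ D ≤ ENNReal.ofReal (∫ y, Φ y ∂μ) :=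
    calc (∑' q : L, ENNReal.ofReal (F (q + w))) * μ D
        ≤ ∑' q : L, ∫⁻ x in D, ENNReal.ofReal (Φ (q + x + w)) ∂μ := by
          rw [← ENNReal.tsum_mul_right]
          exact ENNReal.tsum_le_tsum hcell
      _ = ∫⁻ y, ENNReal.ofReal (Φ (y + w)) ∂μ :=
          (lintegral_eq_tsum_setLIntegral_add hD fun y => ENNReal.ofReal (Φ (y + w))).symm
      _ = ∫⁻ y, ENNReal.ofReal (Φ y) ∂μ :=
          lintegral_add_right_eq_self (fun y => ENNReal.ofReal (Φ y)) w
      _ = ENNReal.ofReal (∫ y, Φ y ∂μ) :=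
          (ofReal_integral_eq_lintegral_ofReal hΦi (ae_of_all μ hΦ)).symm
  rwa [ENNReal.ofReal_mul (inv_nonneg.2 hDμ.le), ENNReal.ofReal_inv_of_pos hDμ,
    ofReal_measureReal hDfin, mul_comm, ← div_eq_mul_inv,
    ENNReal.le_div_iff_mul_le (Or.inl fun h => by simp [Measure.real, h] at hDμ) (Or.inl hDfin)]

lemma aestronglyMeasurable_periodization {F : V → G} (hF : AEStronglyMeasurable F μ)
    (hsum : ∀ w, Summable fun q : L => F (q + w)) :
    AEStronglyMeasurable (periodization L F) μ := by
  refine aestronglyMeasurable_of_tendsto_ae (atTop : Filter (Finset L))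
    (f := fun S w => ∑ q ∈ S, F (q + w)) (fun S => ?_)
    (Eventually.of_forall fun w => (hsum w).hasSum)
  exact Finset.aestronglyMeasurable_fun_sum _ fun q _ =>
    hF.comp_measurePreserving (measurePreserving_add_left μ (q : V))

lemma setIntegral_periodization [NormedSpace ℝ G] (hD : IsAddFundamentalDomain L D μ) {F : V → G}
    (hF : Integrable F μ) : ∫ w in D, periodization L F w ∂μ = ∫ y, F y ∂μ := by
  unfold periodization
  rw [integral_tsum, integral_eq_tsum_setIntegral_add hD hF]
  · exact fun q => (hF.aestronglyMeasurable.comp_measurePreserving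
      (measurePreserving_add_left μ (q : V))).restrict
  · rw [← lintegral_eq_tsum_setLIntegral_add hD fun w => ‖F w‖ₑ]
    exact hF.2.ne

end Periodization

section Cutoff

variable {E H G : Type*} [NormedAddCommGroup G] {A : Set E} {φ : H → G} {w : E × H}

/-- The function `(x, u) ↦ 1_A(x) φ(u)` on the product of direct and internal space. -/
noncomputable def cutoff (A : Set E) (φ : H → G) (w : E × H) : G :=
  A.indicator (fun _ => φ w.2) w.1

lemma cutoff_of_mem (hw : w.1 ∈ A) : cutoff A φ w = φ w.2 :=
  Set.indicator_of_mem hw _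

lemma cutoff_of_notMem (hw : w.1 ∉ A) : cutoff A φ w = 0 :=
  Set.indicator_of_notMem hw _

section Prod

variable [NormedSpace ℝ G]

lemma cutoff_eq_smul (A : Set E) (φ : H → G) :
    cutoff A φ = fun w => A.indicator (1 : E → ℝ) w.1 • φ w.2 := by
  ext w
  by_cases hw : w.1 ∈ A <;> simp [cutoff, hw]

variable [MeasurableSpace E] [MeasurableSpace H] {μ : Measure E} {ν : Measure H}

lemma integrable_cutoff [SFinite μ] (hA : MeasurableSet A) (hμA : μ A ≠ ⊤) (hφ : Integrable φ ν) :
    Integrable (cutoff A φ) (μ.prod ν) := by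
  rw [cutoff_eq_smul]
  exact ((integrable_indicator_iff hA).2 (integrableOn_const hμA)).smul_prod hφ

lemma integral_cutoff [SFinite μ] [SFinite ν] (hA : MeasurableSet A) (φ : H → G) :
    ∫ w, cutoff A φ w ∂(μ.prod ν) = μ.real A • ∫ u, φ u ∂ν := by
  rw [cutoff_eq_smul, integral_prod_smul, integral_indicator_one hA]

end Prod

variable [NormedAddCommGroup H]

lemma cutoff_decayWeight_nonneg (A : Set E) (s : ℝ) (w : E × H) : 0 ≤ cutoff A (decayWeight s) w :=
  Set.indicator_nonneg (fun _ _ => decayWeight_nonneg s w.2) _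

lemma norm_cutoff_le {C s : ℝ} (hφ : ∀ u, ‖φ u‖ ≤ C * decayWeight s u) (A : Set E) (w : E × H) :
    ‖cutoff A φ w‖ ≤ C * cutoff A (decayWeight s) w := by
  by_cases hw : w.1 ∈ A
  · simpa only [cutoff_of_mem hw] using hφ w.2
  · simp only [cutoff_of_notMem hw, norm_zero, mul_zero, le_refl]

variable [NormedAddCommGroup E]

lemma cutoff_decayWeight_le_of_closedBall_subset {s r : ℝ} (hs : 0 ≤ s) {A A' : Set E}
    (hAA' : ∀ x ∈ A, closedBall x r ⊆ A') {w : E × H} (hw : ‖w‖ ≤ r) (y : E × H) :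
    cutoff A (decayWeight s) y ≤ (1 + r) ^ s * cutoff A' (decayWeight s) (y + w) := by
  have hr : 0 ≤ r := (norm_nonneg _).trans hw
  by_cases hy : y.1 ∈ A
  · have hyw : (y + w).1 ∈ A' :=
      hAA' _ hy (by simpa [dist_eq_norm] using (norm_fst_le w).trans hw)
    rw [cutoff_of_mem hy, cutoff_of_mem hyw]
    exact decayWeight_le_of_norm_sub_le hs (by simpa using (norm_snd_le w).trans hw)
  · rw [cutoff_of_notMem hy]
    exact mul_nonneg (by positivity) (cutoff_decayWeight_nonneg _ _ _)

end Cutoff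

section LatticeStrips

variable {E H : Type*} [NormedAddCommGroup E] [NormedSpace ℝ E] [FiniteDimensional ℝ E]
  [MeasurableSpace E] [BorelSpace E]
  [NormedAddCommGroup H] [NormedSpace ℝ H] [FiniteDimensional ℝ H]
  (L : Submodule ℤ (E × H)) [DiscreteTopology L] [IsZLattice ℝ L] {s : ℝ}

lemma exists_forall_periodization_cutoff_decayWeight_le (hs : (Module.finrank ℝ H : ℝ) < s)
    (μ : Measure E) [μ.IsAddHaarMeasure] :
    ∃ K r : ℝ, 0 ≤ K ∧ ∀ A A' : Set E, MeasurableSet A' → μ A' ≠ ⊤ →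
      (∀ x ∈ A, closedBall x r ⊆ A') → ∀ w : E × H,
        (Summable fun q : L => cutoff A (decayWeight s) (q + w : E × H)) ∧
          periodization L (cutoff A (decayWeight s)) w ≤ K * μ.real A' := by
  have hs₀ : 0 ≤ s := (Nat.cast_nonneg _).trans hs.le
  let : MeasurableSpace H := borel H
  have : BorelSpace H := ⟨rfl⟩
  let ν : Measure H := Measure.addHaar
  obtain ⟨D, hDb, hDm, hD⟩ := exists_isBounded_isAddFundamentalDomain L (μ.prod ν)
  obtain ⟨r, hr, hDr⟩ := hDb.exists_pos_norm_le
  have hDμ : 0 < (μ.prod ν).real D := by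
    rw [← ZLattice.covolume_eq_measure_fundamentalDomain L (μ.prod ν) hD]
    exact ZLattice.covolume_pos L (μ.prod ν)
  have hint : Integrable (decayWeight s : H → ℝ) ν := integrable_one_add_norm hs
  refine ⟨((μ.prod ν).real D)⁻¹ * ((1 + r) ^ s * ∫ u, decayWeight s u ∂ν), r,
    mul_nonneg (by positivity) (mul_nonneg (by positivity)
      (integral_nonneg (decayWeight_nonneg s))), fun A A' hA' hμA' hAA' w => ?_⟩
  obtain ⟨hsum, hbound⟩ := summable_and_periodization_le_of_le_add hD hDm hDμ
    (cutoff_decayWeight_nonneg A s)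
    (fun y => mul_nonneg (by positivity : 0 ≤ (1 + r) ^ s) (cutoff_decayWeight_nonneg A' s y))
    ((integrable_cutoff hA' hμA' hint).const_mul _)
    (fun y x hx => cutoff_decayWeight_le_of_closedBall_subset hs₀ hAA' (hDr x hx) y) w
  refine ⟨hsum, hbound.trans_eq ?_⟩
  rw [integral_const_mul, integral_cutoff hA', smul_eq_mul]
  ring

omit [MeasurableSpace E] [BorelSpace E] in
lemma exists_forall_periodization_cutoff_decayWeight_le_of_isBounded
    (hs : (Module.finrank ℝ H : ℝ) < s) {A : Set E} (hA : IsBounded A) :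
    ∃ B, ∀ w : E × H, (Summable fun q : L => cutoff A (decayWeight s) (q + w : E × H)) ∧
      periodization L (cutoff A (decayWeight s)) w ≤ B := by
  let : MeasurableSpace E := borel E
  have : BorelSpace E := ⟨rfl⟩
  obtain ⟨ρ, hρ⟩ := hA.subset_closedBall 0
  obtain ⟨K, r, -, h⟩ := exists_forall_periodization_cutoff_decayWeight_le L hs
    (Measure.addHaar : Measure E)
  exact ⟨_, h A (closedBall 0 (r + ρ)) measurableSet_closedBall measure_closedBall_lt_top.ne
    fun x hx => closedBall_subset_closedBall' (by gcongr; exact hρ hx)⟩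

omit [MeasurableSpace E] [BorelSpace E] in
lemma summable_cutoff_decayWeight (hs : (Module.finrank ℝ H : ℝ) < s) {A : Set E}
    (hA : IsBounded A) (w : E × H) :
    Summable fun q : L => cutoff A (decayWeight s) (q + w : E × H) :=
  have ⟨_, h⟩ := exists_forall_periodization_cutoff_decayWeight_le_of_isBounded L hs hA
  (h w).1

variable (μ : Measure E) [μ.IsAddHaarMeasure]

lemma tendsto_periodization_cutoff_sphereShell (hs : (Module.finrank ℝ H : ℝ) < s) {a : ℝ}
    (ha : 0 ≤ a) (w : E × H) :
    Tendsto (fun R : ℝ => (μ.real (closedBall 0 R))⁻¹ *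
      periodization L (cutoff (sphereShell E R a) (decayWeight s)) w) atTop (𝓝 0) := by
  obtain ⟨K, r, -, h⟩ := exists_forall_periodization_cutoff_decayWeight_le L hs μ
  have hlim := (tendsto_inv_mul_measureReal_sphereShell μ
    (add_nonneg ha (le_max_right r 0))).mul_const K
  rw [zero_mul] at hlim
  refine squeeze_zero (fun R => ?_) (fun R => ?_) hlim
  · exact mul_nonneg (by positivity) (tsum_nonneg fun q => cutoff_decayWeight_nonneg _ _ _)
  · rw [mul_assoc, mul_comm _ K]
    gcongr
    refine (h _ (sphereShell E R (a + max r 0))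
      (measurableSet_closedBall.diff measurableSet_closedBall)
      (isBounded_sphereShell _ _).measure_lt_top.ne (fun x hx => ?_) w).2
    exact (closedBall_subset_closedBall (le_max_left r 0)).trans
      (closedBall_subset_sphereShell_add hx)

end LatticeStrips

section Equidistribution

variable {E H G : Type*} [NormedAddCommGroup E] [NormedAddCommGroup H] [NormedAddCommGroup G]

lemma norm_cutoff_closedBall_add_sub_le {φ : H → G} {s C ε R : ℝ} (hC : 0 ≤ C) (hε : 0 ≤ ε)
    (hφ : ∀ u, ‖φ u‖ ≤ C * decayWeight s u) {x w : E × H}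
    (hxw : ‖φ (x.2 + w.2) - φ x.2‖ ≤ ε * decayWeight s x.2) :
    ‖cutoff (closedBall 0 R) φ (x + w) - cutoff (closedBall 0 R) φ x‖ ≤
      ε * cutoff (closedBall 0 R) (decayWeight s) x +
        C * (cutoff (sphereShell E R ‖w.1‖) (decayWeight s) (x + w) +
          cutoff (sphereShell E R ‖w.1‖) (decayWeight s) x) := by
  have hball := mul_nonneg hε (cutoff_decayWeight_nonneg (closedBall 0 R) s x)
  have hshell := mul_nonneg hC (cutoff_decayWeight_nonneg (sphereShell E R ‖w.1‖) s x)
  have hshell' := mul_nonneg hC (cutoff_decayWeight_nonneg (sphereShell E R ‖w.1‖) s (x + w))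
  rw [mul_add C]
  by_cases hx : x.1 ∈ closedBall 0 R <;> by_cases hy : (x + w).1 ∈ closedBall 0 R
  · rw [cutoff_of_mem hx, cutoff_of_mem hx, cutoff_of_mem hy, Prod.snd_add]
    linarith
  · have hxS : x.1 ∈ sphereShell E R ‖w.1‖ := mem_sphereShell_of_mem_of_add_notMem hx hy
    rw [cutoff_of_notMem hy, zero_sub, norm_neg, cutoff_of_mem hx]
    rw [cutoff_of_mem hxS] at hshell ⊢
    linarith [hφ x.2]
  · have hyS : (x + w).1 ∈ sphereShell E R ‖w.1‖ := by
      rw [← norm_neg]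
      exact mem_sphereShell_of_mem_of_add_notMem hy (by simpa using hx)
    rw [cutoff_of_notMem hx, sub_zero, cutoff_of_mem hy, cutoff_of_notMem hx, cutoff_of_mem hyS]
    linarith [hφ (x + w).2]
  · rw [cutoff_of_notMem hx, cutoff_of_notMem hy, sub_zero, norm_zero]
    positivity

section BallMean

variable [NormedSpace ℝ G] [MeasurableSpace E] (L : Submodule ℤ (E × H)) (μ : Measure E)

/-- The sum of the values of `φ` over the points of the translated lattice `L + w` lying above the
ball of radius `R` in direct space, divided by the volume of this ball. -/
noncomputable def ballMean (φ : H → G) (R : ℝ) (w : E × H) : G :=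
  (μ.real (closedBall 0 R))⁻¹ • periodization L (cutoff (closedBall 0 R) φ) w

lemma ballMean_sub_of_mem {l : E × H} (hl : l ∈ L) (φ : H → G) (R : ℝ) (w : E × H) :
    ballMean L μ φ R (w - l) = ballMean L μ φ R w := by
  rw [ballMean, periodization_sub_of_mem L hl, ballMean]

end BallMean

variable [NormedSpace ℝ E] [FiniteDimensional ℝ E] [NormedSpace ℝ H] [FiniteDimensional ℝ H]
  (L : Submodule ℤ (E × H)) [DiscreteTopology L] [IsZLattice ℝ L]
  {s C : ℝ} {φ : H → G}

lemma summable_cutoff [CompleteSpace G] (hs : (Module.finrank ℝ H : ℝ) < s)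
    (hφ : ∀ u, ‖φ u‖ ≤ C * decayWeight s u) {A : Set E} (hA : IsBounded A) (w : E × H) :
    Summable fun q : L => cutoff A φ (q + w : E × H) :=
  ((summable_cutoff_decayWeight L hs hA w).mul_left C).of_norm_bounded
    fun _ => norm_cutoff_le hφ _ _

variable [NormedSpace ℝ G] [MeasurableSpace E] (μ : Measure E)

lemma norm_ballMean_le (hs : (Module.finrank ℝ H : ℝ) < s)
    (hφ : ∀ u, ‖φ u‖ ≤ C * decayWeight s u) (R : ℝ) (w : E × H) :
    ‖ballMean L μ φ R w‖ ≤ C * ballMean L μ (decayWeight s) R w := by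
  have hsum := (summable_cutoff_decayWeight L hs
    (isBounded_closedBall (x := 0) (r := R)) w).hasSum.mul_left C
  rw [ballMean, ballMean, norm_smul, Real.norm_of_nonneg (by positivity), smul_eq_mul,
    mul_left_comm]
  gcongr
  exact tsum_of_norm_bounded hsum fun q => norm_cutoff_le hφ _ _

lemma norm_ballMean_sub_ballMean_zero_le [CompleteSpace G] (hs : (Module.finrank ℝ H : ℝ) < s)
    (hC : 0 ≤ C) (hφ : ∀ u, ‖φ u‖ ≤ C * decayWeight s u) {ε : ℝ} (hε : 0 ≤ ε) {w : E × H}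
    (hw : ∀ u, ‖φ (u + w.2) - φ u‖ ≤ ε * decayWeight s u) (R : ℝ) :
    ‖ballMean L μ φ R w - ballMean L μ φ R 0‖ ≤ ε * ballMean L μ (decayWeight s) R 0 +
      C * ((μ.real (closedBall 0 R))⁻¹ *
          periodization L (cutoff (sphereShell E R ‖w.1‖) (decayWeight s)) w +
        (μ.real (closedBall 0 R))⁻¹ *
          periodization L (cutoff (sphereShell E R ‖w.1‖) (decayWeight s)) 0) := by
  have hsum (v : E × H) := summable_cutoff L hs hφ (isBounded_closedBall (x := 0) (r := R)) v
  have hball := (summable_cutoff_decayWeight L hs (isBounded_closedBall (x := 0) (r := R))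
    0).hasSum
  have hshell (v : E × H) := (summable_cutoff_decayWeight L hs
    (isBounded_sphereShell R ‖w.1‖) v).hasSum
  have hdiff (q : L) :=
    norm_cutoff_closedBall_add_sub_le (R := R) (x := (q : E × H)) hC hε hφ (hw _)
  rw [ballMean, ballMean, ballMean, ← smul_sub, periodization, periodization,
    ← (hsum w).tsum_sub (hsum 0), norm_smul,
    Real.norm_of_nonneg (by positivity), smul_eq_mul, ← mul_add, mul_left_comm ε, mul_left_comm C,
    ← mul_add]
  gcongr
  refine tsum_of_norm_bounded
    ((hball.mul_left ε).add (((hshell w).add (hshell 0)).mul_left C)) fun q => ?_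
  simpa only [add_zero] using hdiff q

variable [BorelSpace E] [μ.IsAddHaarMeasure]

lemma exists_eventually_ballMean_decayWeight_le (hs : (Module.finrank ℝ H : ℝ) < s) :
    ∃ M, 0 < M ∧ ∀ᶠ R in atTop, ∀ w : E × H, ballMean L μ (decayWeight s) R w ≤ M := by
  obtain ⟨K, r, hK, h⟩ := exists_forall_periodization_cutoff_decayWeight_le L hs μ
  refine ⟨K * 2 + 1, by positivity, ?_⟩
  filter_upwards [(tendsto_inv_mul_measureReal_closedBall_add μ r).eventually_le_const one_lt_two]
    with R hR w
  have hw := (h (closedBall 0 R) (closedBall 0 (R + r)) measurableSet_closedBall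
    measure_closedBall_lt_top.ne (fun x hx => closedBall_subset_closedBall' (by
      rw [add_comm]; gcongr; exact hx)) w).2
  calc ballMean L μ (decayWeight s) R w
      ≤ (μ.real (closedBall 0 R))⁻¹ * (K * μ.real (closedBall 0 (R + r))) := by
        rw [ballMean, smul_eq_mul]
        gcongr
    _ = K * ((μ.real (closedBall 0 R))⁻¹ * μ.real (closedBall 0 (R + r))) := by ring
    _ ≤ K * 2 := by gcongr
    _ ≤ K * 2 + 1 := le_add_of_nonneg_right zero_le_one

lemma tendsto_ballMean_sub_ballMean_zero [CompleteSpace G]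
    (hL : Dense (Prod.snd '' (L : Set (E × H))))
    (hs : (Module.finrank ℝ H : ℝ) < s) (hC : 0 ≤ C) (hφ : ∀ u, ‖φ u‖ ≤ C * decayWeight s u)
    (hφu : WeightedUniformContinuous s φ) (w : E × H) :
    Tendsto (fun R => ballMean L μ φ R w - ballMean L μ φ R 0) atTop (𝓝 0) := by
  obtain ⟨M, hM, hbulk⟩ := exists_eventually_ballMean_decayWeight_le L μ hs
  rw [Metric.tendsto_nhds]
  intro ε hε
  obtain ⟨δ, hδ, hφδ⟩ := hφu (ε / (2 * M)) (by positivity)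
  -- By periodicity `w` may be replaced by `w - l`, whose internal component is as small as desired.
  obtain ⟨_, ⟨l, hl, rfl⟩, hwl⟩ := hL.exists_dist_lt w.2 hδ
  have hshell_at (v : E × H) :=
    tendsto_periodization_cutoff_sphereShell L μ hs (norm_nonneg (w - l).1) v
  have hshell := ((hshell_at (w - l)).add (hshell_at 0)).const_mul C
  rw [add_zero, mul_zero] at hshell
  filter_upwards [hbulk, hshell.eventually_lt_const (half_pos hε)] with R hRM hRshell
  rw [dist_zero_right, ← ballMean_sub_of_mem L μ hl φ R w]
  refine (norm_ballMean_sub_ballMean_zero_le L μ hs hC hφ (by positivity)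
    (hφδ _ (by simpa only [dist_eq_norm, Prod.snd_sub] using hwl)) R).trans_lt ?_
  calc _ < ε / (2 * M) * M + ε / 2 := add_lt_add_of_le_of_lt (by gcongr; exact hRM 0) hRshell
    _ = ε := by field_simp; norm_num

variable [MeasurableSpace H] [BorelSpace H] (ν : Measure H) [ν.IsAddHaarMeasure]

lemma aestronglyMeasurable_ballMean [CompleteSpace G] (hs : (Module.finrank ℝ H : ℝ) < s)
    (hφi : Integrable φ ν) (hφ : ∀ u, ‖φ u‖ ≤ C * decayWeight s u) (R : ℝ) :
    AEStronglyMeasurable (ballMean L μ φ R) (μ.prod ν) :=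
  (aestronglyMeasurable_periodization (integrable_cutoff measurableSet_closedBall
    measure_closedBall_lt_top.ne hφi).aestronglyMeasurable
      fun w => summable_cutoff L hs hφ isBounded_closedBall w).const_smul _

lemma setIntegral_ballMean {D : Set (E × H)} (hD : IsAddFundamentalDomain L D (μ.prod ν))
    (hφ : Integrable φ ν) {R : ℝ} (hR : 0 < R) :
    ∫ w in D, ballMean L μ φ R w ∂(μ.prod ν) = ∫ u, φ u ∂ν := by
  simp only [ballMean]
  rw [integral_smul, setIntegral_periodization hD
    (integrable_cutoff measurableSet_closedBall measure_closedBall_lt_top.ne hφ),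
    integral_cutoff measurableSet_closedBall, smul_smul,
    inv_mul_cancel₀ (measureReal_closedBall_pos μ hR).ne', one_smul]

variable [CompleteSpace G]

lemma tendsto_setIntegral_ballMean_sub (hL : Dense (Prod.snd '' (L : Set (E × H))))
    (hs : (Module.finrank ℝ H : ℝ) < s) (hC : 0 ≤ C) (hφi : Integrable φ ν)
    (hφ : ∀ u, ‖φ u‖ ≤ C * decayWeight s u) (hφu : WeightedUniformContinuous s φ)
    {D : Set (E × H)} (hD : μ.prod ν D ≠ ⊤) :
    Tendsto (fun R => (∫ w in D, ballMean L μ φ R w ∂(μ.prod ν)) -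
      (μ.prod ν).real D • ballMean L μ φ R 0) atTop (𝓝 0) := by
  have : IsFiniteMeasure ((μ.prod ν).restrict D) := ⟨by simpa using hD.lt_top⟩
  have hmeas (R : ℝ) : AEStronglyMeasurable (ballMean L μ φ R) ((μ.prod ν).restrict D) :=
    (aestronglyMeasurable_ballMean L μ ν hs hφi hφ R).restrict
  obtain ⟨M, -, hM⟩ := exists_eventually_ballMean_decayWeight_le L μ hs
  have hbound : ∀ᶠ R in atTop, ∀ w, ‖ballMean L μ φ R w‖ ≤ C * M := by
    filter_upwards [hM] with R hR w
    exact (norm_ballMean_le L μ hs hφ R w).trans (mul_le_mul_of_nonneg_left (hR w) hC)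
  have hlim : Tendsto (fun R => ∫ w in D, (ballMean L μ φ R w - ballMean L μ φ R 0) ∂(μ.prod ν))
      atTop (𝓝 (∫ _ in D, (0 : G) ∂(μ.prod ν))) := by
    refine tendsto_integral_filter_of_dominated_convergence (fun _ => C * M + C * M)
      (Eventually.of_forall fun R => (hmeas R).sub aestronglyMeasurable_const) ?_
      (integrable_const _)
      (ae_of_all _ fun w => tendsto_ballMean_sub_ballMean_zero L μ hL hs hC hφ hφu w)
    filter_upwards [hbound] with R hR
    exact ae_of_all _ fun w => (norm_sub_le _ _).trans (add_le_add (hR w) (hR 0))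
  rw [integral_zero] at hlim
  refine hlim.congr' ?_
  filter_upwards [hbound] with R hR
  rw [integral_sub ((integrable_const (C * M)).mono' (hmeas R) (ae_of_all _ hR))
    (integrable_const _), setIntegral_const]

lemma tendsto_ballMean_zero (hL : Dense (Prod.snd '' (L : Set (E × H))))
    (hs : (Module.finrank ℝ H : ℝ) < s) (hC : 0 ≤ C) (hφc : Continuous φ)
    (hφ : ∀ u, ‖φ u‖ ≤ C * decayWeight s u) (hφu : WeightedUniformContinuous s φ) :
    Tendsto (fun R => ballMean L μ φ R 0) atTop
      (𝓝 ((ZLattice.covolume L (μ.prod ν))⁻¹ • ∫ u, φ u ∂ν)) := by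
  have hφi : Integrable φ ν :=
    ((integrable_one_add_norm hs).const_mul C).mono' hφc.aestronglyMeasurable (ae_of_all ν hφ)
  obtain ⟨D, hDb, -, hD⟩ := exists_isBounded_isAddFundamentalDomain L (μ.prod ν)
  have hcov : ZLattice.covolume L (μ.prod ν) ≠ 0 := ZLattice.covolume_ne_zero L (μ.prod ν)
  have hsub := tendsto_setIntegral_ballMean_sub L μ ν hL hs hC hφi hφ hφu hDb.measure_lt_top.ne
  rw [← ZLattice.covolume_eq_measure_fundamentalDomain L (μ.prod ν) hD] at hsub
  have hlim := ((tendsto_const_nhds (x := ∫ u, φ u ∂ν)).sub hsub).const_smul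
    (ZLattice.covolume L (μ.prod ν))⁻¹
  rw [sub_zero] at hlim
  refine hlim.congr' ?_
  filter_upwards [eventually_gt_atTop 0] with R hR
  rw [setIntegral_ballMean L μ ν hD hφi hR, sub_sub_cancel, inv_smul_smul₀ hcov]

end Equidistribution

section Autocorrelation

/-- The value at `v` of the convolution `f ∗ f̃` with respect to `ν`, where `f̃ u = conj (f (-u))`;
it serves both as the coefficient of the limit and as the test function for positive
definiteness. -/
noncomputable def selfCorrelation {H : Type*} [Sub H] [MeasurableSpace H] (ν : Measure H)
    (f : H → ℂ) (v : H) : ℂ :=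
  ∫ u, f u * conj (f (u - v)) ∂ν

variable {E H : Type*} [NormedAddCommGroup E] [NormedAddCommGroup H] {f : H → ℂ} {s C : ℝ}

lemma norm_cutoff_mul_conj_cutoff_sub_le (hs : 0 ≤ s) (hC : 0 ≤ C)
    (hfC : ∀ u, ‖f u‖ ≤ C * decayWeight s u) (A : Set E) (q p : E × H) :
    ‖cutoff A f q * conj (cutoff A f (q - p))‖ ≤ C * C * 2 ^ s * decayWeight s p.2 *
      (cutoff A (decayWeight s) q + cutoff A (decayWeight s) (q - p)) := by
  have hright : 0 ≤ C * C * 2 ^ s * decayWeight s p.2 *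
      (cutoff A (decayWeight s) q + cutoff A (decayWeight s) (q - p)) :=
    mul_nonneg (mul_nonneg (by positivity) (decayWeight_nonneg s _))
      (add_nonneg (cutoff_decayWeight_nonneg A s _) (cutoff_decayWeight_nonneg A s _))
  by_cases hq : q.1 ∈ A
  · by_cases hqp : (q - p).1 ∈ A
    · simp only [cutoff_of_mem hq, cutoff_of_mem hqp, Prod.snd_sub, norm_mul, RCLike.norm_conj]
      calc ‖f q.2‖ * ‖f (q.2 - p.2)‖
          ≤ C * decayWeight s q.2 * (C * decayWeight s (q.2 - p.2)) :=
            mul_le_mul (hfC _) (hfC _) (norm_nonneg _) ((norm_nonneg _).trans (hfC _))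
        _ = C * C * (decayWeight s q.2 * decayWeight s (q.2 - p.2)) := by ring
        _ ≤ C * C *
            (2 ^ s * decayWeight s p.2 * (decayWeight s q.2 + decayWeight s (q.2 - p.2))) :=
          mul_le_mul_of_nonneg_left (decayWeight_mul_decayWeight_sub_le hs _ _) (mul_nonneg hC hC)
        _ = _ := by ring
    · rwa [cutoff_of_notMem hqp, map_zero, mul_zero, norm_zero]
  · rwa [cutoff_of_notMem hq, zero_mul, norm_zero]

lemma norm_cutoff_mul_conj_cutoff_sub_sub_le (hs : 0 ≤ s) (hC : 0 ≤ C)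
    (hfC : ∀ u, ‖f u‖ ≤ C * decayWeight s u) (R : ℝ) (q p : E × H) :
    ‖cutoff (closedBall 0 R) f q * conj (cutoff (closedBall 0 R) f (q - p)) -
        cutoff (closedBall 0 R) (fun u => f u * conj (f (u - p.2))) q‖ ≤
      C * C * cutoff (sphereShell E R ‖p.1‖) (decayWeight s) q := by
  have hshell := cutoff_decayWeight_nonneg (sphereShell E R ‖p.1‖) s q
  by_cases hq : q.1 ∈ closedBall 0 R
  · by_cases hqp : (q - p).1 ∈ closedBall 0 R
    · rw [cutoff_of_mem hq, cutoff_of_mem hqp, cutoff_of_mem hq, Prod.snd_sub, sub_self, norm_zero]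
      positivity
    · have hqS : q.1 ∈ sphereShell E R ‖p.1‖ := by
        rw [← norm_neg]
        exact mem_sphereShell_of_mem_of_add_notMem hq (by rwa [← sub_eq_add_neg])
      simp only [cutoff_of_notMem hqp, cutoff_of_mem hq, cutoff_of_mem hqS, map_zero, mul_zero,
        zero_sub, norm_neg]
      exact norm_mul_conj_sub_le hs hC hfC p.2 q.2
  · rw [cutoff_of_notMem hq, cutoff_of_notMem hq, zero_mul, sub_zero, norm_zero]
    positivity

variable [NormedSpace ℝ E] [FiniteDimensional ℝ E] [NormedSpace ℝ H] [FiniteDimensional ℝ H]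
  (L : Submodule ℤ (E × H)) [DiscreteTopology L] [IsZLattice ℝ L]

lemma hasSum_cutoff_decayWeight_add_sub (hs : (Module.finrank ℝ H : ℝ) < s) {A : Set E}
    (hA : IsBounded A) (p : E × H) :
    HasSum (fun q : L => cutoff A (decayWeight s) (q : E × H) +
      cutoff A (decayWeight s) (q - p : E × H))
      (periodization L (cutoff A (decayWeight s)) 0 +
        periodization L (cutoff A (decayWeight s)) (-p)) := by
  unfold periodization
  simpa only [add_zero, ← sub_eq_add_neg] using
    (summable_cutoff_decayWeight L hs hA 0).hasSum.add
      (summable_cutoff_decayWeight L hs hA (-p)).hasSum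

lemma summable_cutoff_mul_conj_cutoff_sub (hs : (Module.finrank ℝ H : ℝ) < s) (hC : 0 ≤ C)
    (hfC : ∀ u, ‖f u‖ ≤ C * decayWeight s u) {A : Set E} (hA : IsBounded A) (p : E × H) :
    Summable fun q : L => cutoff A f (q : E × H) * conj (cutoff A f (q - p : E × H)) :=
  ((hasSum_cutoff_decayWeight_add_sub L hs hA p).summable.mul_left _).of_norm_bounded
    fun q => norm_cutoff_mul_conj_cutoff_sub_le ((Nat.cast_nonneg _).trans hs.le) hC hfC A q p

variable [MeasurableSpace E]

/-- The coefficient at the lattice vector `p` of the autocorrelation of the comb restricted to the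
ball of radius `R`, as a sum over the lattice rather than over its projection to direct space. -/
noncomputable def latticeAutocorr (μ : Measure E) (f : H → ℂ) (R : ℝ) (p : E × H) : ℂ :=
  (μ.real (closedBall 0 R))⁻¹ •
    ∑' q : L, cutoff (closedBall 0 R) f (q : E × H) *
      conj (cutoff (closedBall 0 R) f (q - p : E × H))

variable [BorelSpace E] (μ : Measure E) [μ.IsAddHaarMeasure]

lemma exists_eventually_norm_latticeAutocorr_le (hs : (Module.finrank ℝ H : ℝ) < s) (hC : 0 ≤ C)
    (hfC : ∀ u, ‖f u‖ ≤ C * decayWeight s u) :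
    ∃ B, 0 ≤ B ∧ ∀ᶠ R in atTop, ∀ p : E × H,
      ‖latticeAutocorr L μ f R p‖ ≤ B * decayWeight s p.2 := by
  have hs₀ : 0 ≤ s := (Nat.cast_nonneg _).trans hs.le
  obtain ⟨M, hM₀, hM⟩ := exists_eventually_ballMean_decayWeight_le L μ hs
  refine ⟨C * C * 2 ^ s * (M + M), by positivity, ?_⟩
  filter_upwards [hM] with R hR p
  have hp := decayWeight_nonneg s p.2
  have hsum := tsum_of_norm_bounded
    ((hasSum_cutoff_decayWeight_add_sub L hs isBounded_closedBall p).mul_left _)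
    fun q => norm_cutoff_mul_conj_cutoff_sub_le hs₀ hC hfC (closedBall 0 R) (q : E × H) p
  rw [latticeAutocorr, norm_smul, Real.norm_of_nonneg (by positivity)]
  calc _ ≤ _ := mul_le_mul_of_nonneg_left hsum (by positivity)
    _ = C * C * 2 ^ s * decayWeight s p.2 *
        (ballMean L μ (decayWeight s) R 0 + ballMean L μ (decayWeight s) R (-p)) := by
      simp only [ballMean, smul_eq_mul]
      ring
    _ ≤ C * C * 2 ^ s * decayWeight s p.2 * (M + M) := by
      gcongr
      exacts [hR 0, hR (-p)]
    _ = C * C * 2 ^ s * (M + M) * decayWeight s p.2 := by ring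

lemma tendsto_latticeAutocorr_sub_ballMean (hs : (Module.finrank ℝ H : ℝ) < s) (hC : 0 ≤ C)
    (hfC : ∀ u, ‖f u‖ ≤ C * decayWeight s u) (p : E × H) :
    Tendsto (fun R => latticeAutocorr L μ f R p -
      ballMean L μ (fun u => f u * conj (f (u - p.2))) R 0) atTop (𝓝 0) := by
  have hs₀ : 0 ≤ s := (Nat.cast_nonneg _).trans hs.le
  have hlim := (tendsto_periodization_cutoff_sphereShell L μ hs (norm_nonneg p.1) 0).const_mul
    (C * C)
  rw [mul_zero] at hlim
  refine squeeze_zero_norm (fun R => ?_) hlim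
  have hshell := (summable_cutoff_decayWeight L hs (isBounded_sphereShell R ‖p.1‖) 0).hasSum
  have hprod := summable_cutoff_mul_conj_cutoff_sub L hs hC hfC
    (isBounded_closedBall (x := 0) (r := R)) p
  have hmean := summable_cutoff L hs (norm_mul_conj_sub_le hs₀ hC hfC p.2)
    (isBounded_closedBall (x := 0) (r := R)) 0
  rw [latticeAutocorr, ballMean, periodization, ← smul_sub, ← hprod.tsum_sub hmean, norm_smul,
    Real.norm_of_nonneg (by positivity), mul_left_comm]
  gcongr
  refine tsum_of_norm_bounded (hshell.mul_left (C * C)) fun q => ?_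
  simpa only [add_zero] using norm_cutoff_mul_conj_cutoff_sub_sub_le hs₀ hC hfC R (q : E × H) p

variable [MeasurableSpace H] [BorelSpace H] (ν : Measure H) [ν.IsAddHaarMeasure]

lemma tendsto_latticeAutocorr (hL : Dense (Prod.snd '' (L : Set (E × H))))
    (hs : (Module.finrank ℝ H : ℝ) < s) (hC : 0 ≤ C) (hf : Continuous f)
    (hfC : ∀ u, ‖f u‖ ≤ C * decayWeight s u) (p : E × H) :
    Tendsto (fun R => latticeAutocorr L μ f R p) atTop
      (𝓝 ((ZLattice.covolume L (μ.prod ν))⁻¹ • selfCorrelation ν f p.2)) := by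
  have hs₀ : 0 < s := (Nat.cast_nonneg _).trans_lt hs
  have hcont : Continuous fun u => f u * conj (f (u - p.2)) := by fun_prop
  have hmean := tendsto_ballMean_zero L μ ν hL hs (mul_nonneg hC hC) hcont
    (norm_mul_conj_sub_le hs₀.le hC hfC p.2)
    (weightedUniformContinuous_mul_conj_sub hs₀ hC hf hfC p.2)
  simpa only [selfCorrelation, sub_add_cancel, zero_add] using
    (tendsto_latticeAutocorr_sub_ballMean L μ hs hC hfC p).add hmean

lemma exists_norm_covolume_inv_smul_selfCorrelation_le
    (hL : Dense (Prod.snd '' (L : Set (E × H)))) (hs : (Module.finrank ℝ H : ℝ) < s) (hC : 0 ≤ C)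
    (hf : Continuous f) (hfC : ∀ u, ‖f u‖ ≤ C * decayWeight s u) :
    ∃ B, 0 ≤ B ∧ ∀ v, ‖(ZLattice.covolume L (μ.prod ν))⁻¹ • selfCorrelation ν f v‖ ≤
      B * decayWeight s v := by
  obtain ⟨B, hB, hbound⟩ := exists_eventually_norm_latticeAutocorr_le L μ hs hC hfC
  exact ⟨B, hB, fun v => le_of_tendsto (tendsto_latticeAutocorr L μ ν hL hs hC hf hfC (0, v)).norm
    (hbound.mono fun R hR => hR (0, v))⟩

lemma tendsto_tsum_latticeAutocorr_mul (hL : Dense (Prod.snd '' (L : Set (E × H))))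
    (hs : (Module.finrank ℝ H : ℝ) < s) (hC : 0 ≤ C) (hf : Continuous f)
    (hfC : ∀ u, ‖f u‖ ≤ C * decayWeight s u) {g : E → ℂ} (hg : Continuous g)
    (hgc : HasCompactSupport g) :
    Tendsto (fun R => ∑' p : L, latticeAutocorr L μ f R p * g (p : E × H).1) atTop
      (𝓝 (∑' p : L, (ZLattice.covolume L (μ.prod ν))⁻¹ • selfCorrelation ν f (p : E × H).2 *
        g (p : E × H).1)) := by
  obtain ⟨B, -, hbound⟩ := exists_eventually_norm_latticeAutocorr_le L μ hs hC hfC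
  obtain ⟨M, hM⟩ := hgc.exists_bound_of_continuous hg
  have hdom := (summable_cutoff_decayWeight L hs hgc.isCompact.isBounded 0).mul_left (B * M)
  simp only [add_zero] at hdom
  refine tendsto_tsum_of_dominated_convergence hdom
    (fun p => (tendsto_latticeAutocorr L μ ν hL hs hC hf hfC p).mul_const _) ?_
  filter_upwards [hbound] with R hR p
  by_cases hp : (p : E × H).1 ∈ tsupport g
  · rw [cutoff_of_mem hp, norm_mul, mul_right_comm]
    exact mul_le_mul (hR p) (hM _) (norm_nonneg _) ((norm_nonneg _).trans (hR p))
  · rw [cutoff_of_notMem hp, image_eq_zero_of_notMem_tsupport hp, mul_zero, norm_zero, mul_zero]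

end Autocorrelation

section PositiveDefinite

variable {V ι : Type*} [AddCommGroup V] [MeasurableSpace V] {μ : Measure V} {g : V → ℂ}

lemma selfCorrelation_sub [MeasurableAdd V] [μ.IsAddRightInvariant] (g : V → ℂ) (x y : V) :
    selfCorrelation μ g (x - y) = ∫ t, g (t + x) * conj (g (t + y)) ∂μ := by
  rw [selfCorrelation, ← integral_add_right_eq_self _ x]
  have hshift (t : V) : t + x - (x - y) = t + y := by abel
  simp only [hshift]

lemma selfCorrelation_eq_convolution (μ : Measure V) (g : V → ℂ) :
    selfCorrelation μ g =
      convolution g (fun x => conj (g (-x))) (ContinuousLinearMap.mul ℝ ℂ) μ := by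
  ext z
  simp only [selfCorrelation, convolution, ContinuousLinearMap.mul_apply', neg_sub]

variable [TopologicalSpace V] [IsTopologicalAddGroup V]

omit [MeasurableSpace V] in
lemma hasCompactSupport_conj_comp_neg (hgc : HasCompactSupport g) :
    HasCompactSupport fun x => conj (g (-x)) :=
  (hgc.comp_homeomorph (Homeomorph.neg V)).comp_left (map_zero _)

lemma hasCompactSupport_selfCorrelation [T2Space V] (hgc : HasCompactSupport g) :
    HasCompactSupport (selfCorrelation μ g) := by
  rw [selfCorrelation_eq_convolution]
  exact hgc.convolution _ (hasCompactSupport_conj_comp_neg hgc)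

variable [BorelSpace V] [IsFiniteMeasureOnCompacts μ]

lemma continuous_selfCorrelation (hg : Continuous g) (hgc : HasCompactSupport g) :
    Continuous (selfCorrelation μ g) := by
  rw [selfCorrelation_eq_convolution]
  exact (hasCompactSupport_conj_comp_neg hgc).continuous_convolution_right _
    (hg.integrable_of_hasCompactSupport hgc).locallyIntegrable (by fun_prop)

lemma summable_mul_conj_mul_selfCorrelation [T2Space V] (hg : Continuous g)
    (hgc : HasCompactSupport g) {a : ι → ℂ} (ha : Summable fun i => ‖a i‖) (x : ι → V) :
    Summable fun i : ι × ι => a i.1 * conj (a i.2) * selfCorrelation μ g (x i.1 - x i.2) := by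
  obtain ⟨M, hM⟩ := (hasCompactSupport_selfCorrelation (μ := μ) hgc).exists_bound_of_continuous
    (continuous_selfCorrelation hg hgc)
  have haa : Summable fun i : ι × ι => ‖a i.1‖ * ‖a i.2‖ :=
    ha.mul_of_nonneg ha (fun _ => norm_nonneg _) fun _ => norm_nonneg _
  refine (haa.mul_right M).of_norm_bounded fun i => ?_
  rw [norm_mul, norm_mul, RCLike.norm_conj]
  gcongr
  exact hM _

variable [μ.IsAddRightInvariant]

lemma sum_mul_conj_mul_selfCorrelation_nonneg (hg : Continuous g) (hgc : HasCompactSupport g)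
    (S : Finset ι) (a : ι → ℂ) (x : ι → V) :
    0 ≤ ∑ i ∈ S ×ˢ S, a i.1 * conj (a i.2) * selfCorrelation μ g (x i.1 - x i.2) := by
  have hint (i j : ι) : Integrable (fun t => g (t + x i) * conj (g (t + x j))) μ :=
    Continuous.integrable_of_hasCompactSupport (by fun_prop)
      (HasCompactSupport.mul_right (hgc.comp_homeomorph (Homeomorph.addRight (x i))))
  have hsq : ∑ i ∈ S ×ˢ S, a i.1 * conj (a i.2) * selfCorrelation μ g (x i.1 - x i.2) =
      ∫ t, ((Complex.normSq (∑ i ∈ S, a i * g (t + x i)) : ℝ) : ℂ) ∂μ := by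
    simp_rw [selfCorrelation_sub, ← integral_const_mul]
    rw [← integral_finsetSum _ fun i _ => (hint _ _).const_mul _]
    refine integral_congr_ae (ae_of_all _ fun t => ?_)
    simp only [← Complex.mul_conj, map_sum, map_mul, Finset.sum_mul_sum, ← Finset.sum_product',
      mul_mul_mul_comm]
  rw [hsq, integral_complex_ofReal]
  exact_mod_cast integral_nonneg fun t => Complex.normSq_nonneg _

lemma tsum_mul_conj_mul_selfCorrelation_nonneg [T2Space V] (hg : Continuous g)
    (hgc : HasCompactSupport g) {a : ι → ℂ} (ha : Summable fun i => ‖a i‖) (x : ι → V) :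
    0 ≤ ∑' i : ι × ι, a i.1 * conj (a i.2) * selfCorrelation μ g (x i.1 - x i.2) :=
  have hdiag : Tendsto (fun S : Finset ι => S ×ˢ S) atTop atTop :=
    tendsto_finsetProd_atTop.comp tendsto_atTop_diagonal
  ge_of_tendsto ((summable_mul_conj_mul_selfCorrelation hg hgc ha x).hasSum.comp hdiag)
    (Eventually.of_forall fun S => sum_mul_conj_mul_selfCorrelation_nonneg hg hgc S a x)

lemma tsum_autocorr_mul_selfCorrelation_nonneg [T2Space V] {Γ : Type*} [AddCommGroup Γ] (x : Γ →+ V)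
    (hg : Continuous g) (hgc : HasCompactSupport g) {a : Γ → ℂ} (ha : Summable fun p => ‖a p‖) :
    0 ≤ ∑' p, (∑' q, a q * conj (a (q - p))) * selfCorrelation μ g (x p) := by
  let e : Γ × Γ ≃ Γ × Γ := (Equiv.prodComm Γ Γ).trans
    (Equiv.prodShear (Equiv.refl Γ) Equiv.subLeft)
  have hsum := summable_mul_conj_mul_selfCorrelation (μ := μ) hg hgc ha x
  have hnonneg := tsum_mul_conj_mul_selfCorrelation_nonneg (μ := μ) hg hgc ha x
  rw [← e.tsum_eq, Summable.tsum_prod (f := fun i => a (e i).1 * conj (a (e i).2) *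
    selfCorrelation μ g (x (e i).1 - x (e i).2)) (e.summable_iff.2 hsum)] at hnonneg
  simpa [e, tsum_mul_right] using hnonneg

end PositiveDefinite

section LatticePositivity

variable {E H : Type*} [NormedAddCommGroup E] [NormedSpace ℝ E] [FiniteDimensional ℝ E]
  [MeasurableSpace E] [BorelSpace E]
  [NormedAddCommGroup H] [NormedSpace ℝ H] [FiniteDimensional ℝ H]
  (L : Submodule ℤ (E × H)) [DiscreteTopology L] [IsZLattice ℝ L]
  (μ : Measure E) [μ.IsAddHaarMeasure] {f : H → ℂ} {s C : ℝ} {g : E → ℂ}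

lemma tsum_latticeAutocorr_mul_selfCorrelation_nonneg (hs : (Module.finrank ℝ H : ℝ) < s)
    (hfC : ∀ u, ‖f u‖ ≤ C * decayWeight s u) (hg : Continuous g) (hgc : HasCompactSupport g)
    (R : ℝ) : 0 ≤ ∑' p : L, latticeAutocorr L μ f R p * selfCorrelation μ g (p : E × H).1 := by
  have hsum : Summable fun q : L => ‖cutoff (closedBall 0 R) f (q : E × H)‖ := by
    simpa only [add_zero] using (summable_cutoff L hs hfC isBounded_closedBall 0).norm
  have hnonneg := tsum_autocorr_mul_selfCorrelation_nonneg (μ := μ)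
    ((AddMonoidHom.fst E H).comp L.toAddSubgroup.subtype) hg hgc hsum
  simp only [latticeAutocorr, smul_mul_assoc, tsum_const_smul'']
  exact smul_nonneg (by positivity) hnonneg

variable [MeasurableSpace H] [BorelSpace H] (ν : Measure H) [ν.IsAddHaarMeasure]

lemma tsum_covolume_inv_smul_selfCorrelation_mul_selfCorrelation_nonneg
    (hL : Dense (Prod.snd '' (L : Set (E × H)))) (hs : (Module.finrank ℝ H : ℝ) < s) (hC : 0 ≤ C)
    (hf : Continuous f) (hfC : ∀ u, ‖f u‖ ≤ C * decayWeight s u) (hg : Continuous g)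
    (hgc : HasCompactSupport g) :
    0 ≤ ∑' p : L, (ZLattice.covolume L (μ.prod ν))⁻¹ • selfCorrelation ν f (p : E × H).2 *
      selfCorrelation μ g (p : E × H).1 :=
  ge_of_tendsto (tendsto_tsum_latticeAutocorr_mul L μ ν hL hs hC hf hfC
      (continuous_selfCorrelation hg hgc) (hasCompactSupport_selfCorrelation hgc))
    (Eventually.of_forall (tsum_latticeAutocorr_mul_selfCorrelation_nonneg L μ hs hfC hg hgc))

end LatticePositivity

section DirectSpace

variable {E H : Type*} [NormedAddCommGroup E] [NormedAddCommGroup H] {L : Submodule ℤ (E × H)}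
  {star : E → H}

lemma injective_fst_of_star (hstar : ∀ p ∈ L, star p.1 = p.2) :
    Function.Injective fun q : L => (q : E × H).1 := fun p q hpq =>
  Subtype.ext (Prod.ext hpq (by rw [← hstar p p.2, ← hstar q q.2]; exact congrArg star hpq))

lemma tsum_image_fst_eq {G : Type*} [AddCommMonoid G] [TopologicalSpace G]
    (hstar : ∀ p ∈ L, star p.1 = p.2) (F : E → G) :
    ∑' z : (Prod.fst '' (L : Set (E × H)) : Set E), F z = ∑' p : L, F (p : E × H).1 :=
  tsum_image F (Set.injOn_iff_injective.2 (injective_fst_of_star hstar))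

/-- The coefficient at `z` of the finite autocorrelation `vol(B_R)⁻¹ ω_R ∗ ω̃_R` of the comb
`ω = ∑ f(x*) δ_x`, where `x` runs through the projection of `L` to direct space and
`ω_R` is the restriction of `ω` to the ball `B_R`. -/
noncomputable def finiteAutocorr [MeasurableSpace E] (L : Submodule ℤ (E × H)) (μ : Measure E)
    (star : E → H) (f : H → ℂ) (R : ℝ) (z : E) : ℂ :=
  (μ.real (closedBall 0 R))⁻¹ •
    ∑' x : ({x | x ∈ Prod.fst '' (L : Set (E × H)) ∧ x ∈ closedBall (0 : E) R ∧
      x - z ∈ Prod.fst '' (L : Set (E × H)) ∧ x - z ∈ closedBall (0 : E) R} : Set E),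
      f (star x) * conj (f (star (x - z)))

lemma finiteAutocorr_fst [MeasurableSpace E] (μ : Measure E) (hstar : ∀ p ∈ L, star p.1 = p.2)
    (f : H → ℂ) (R : ℝ) (p : L) :
    finiteAutocorr L μ star f R (p : E × H).1 = latticeAutocorr L μ f R p := by
  rw [finiteAutocorr, latticeAutocorr,
    tsum_subtype _ fun x => f (star x) * conj (f (star (x - (p : E × H).1))),
    ← (injective_fst_of_star hstar).tsum_eq]
  · refine congrArg _ (tsum_congr fun q => ?_)
    have hqL : (q : E × H).1 ∈ Prod.fst '' (L : Set (E × H)) := ⟨q, q.2, rfl⟩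
    have hqpL : (q : E × H).1 - (p : E × H).1 ∈ Prod.fst '' (L : Set (E × H)) :=
      ⟨_, (q - p).2, rfl⟩
    by_cases hq : (q : E × H).1 ∈ closedBall 0 R
    · by_cases hqp : (q - p : E × H).1 ∈ closedBall 0 R
      · rw [cutoff_of_mem hq, cutoff_of_mem hqp, ← hstar q q.2, ← hstar _ (L.sub_mem q.2 p.2)]
        refine Set.indicator_of_mem ?_ _
        exact ⟨hqL, hq, hqpL, hqp⟩
      · rw [cutoff_of_notMem hqp, map_zero, mul_zero]
        exact Set.indicator_of_notMem (fun h => hqp h.2.2.2) _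
    · rw [cutoff_of_notMem hq, zero_mul]
      exact Set.indicator_of_notMem (fun h => hq h.2.1) _
  · intro x hx
    obtain ⟨q, hq, rfl⟩ := (Set.mem_of_indicator_ne_zero hx).1
    exact ⟨⟨q, hq⟩, rfl⟩

variable [NormedSpace ℝ E] [FiniteDimensional ℝ E] [NormedSpace ℝ H] [FiniteDimensional ℝ H]
  [DiscreteTopology L] [IsZLattice ℝ L]

lemma exists_forall_summable_and_tsum_le_of_le_decayWeight {s B : ℝ}
    (hs : (Module.finrank ℝ H : ℝ) < s) (hstar : ∀ p ∈ L, star p.1 = p.2) (hB : 0 ≤ B)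
    {F : E → ℝ} (hF₀ : ∀ z, 0 ≤ F z) (hF : ∀ p ∈ L, F p.1 ≤ B * decayWeight s p.2) {K : Set E}
    (hK : IsBounded K) :
    ∃ M, ∀ y, (Summable fun z : (Prod.fst '' (L : Set (E × H)) ∩ {w | w - y ∈ K} : Set E) =>
      F z) ∧
      ∑' z : (Prod.fst '' (L : Set (E × H)) ∩ {w | w - y ∈ K} : Set E), F z ≤ M := by
  obtain ⟨M, hM⟩ := exists_forall_periodization_cutoff_decayWeight_le_of_isBounded L hs hK
  refine ⟨B * M, fun y => ?_⟩
  set S : Set E := Prod.fst '' (L : Set (E × H)) ∩ {w | w - y ∈ K}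
  have hinj := injective_fst_of_star hstar
  have hsupp : Function.support (S.indicator F) ⊆ Set.range fun q : L => (q : E × H).1 := by
    intro x hx
    obtain ⟨q, hq, rfl⟩ := (Set.mem_of_indicator_ne_zero hx).1
    exact ⟨⟨q, hq⟩, rfl⟩
  have hnonneg (x : E) : 0 ≤ S.indicator F x := Set.indicator_nonneg (fun z _ => hF₀ z) x
  have hle (q : L) : S.indicator F (q : E × H).1 ≤
      B * cutoff K (decayWeight s) ((q : E × H) + (-y, 0)) := by
    by_cases hq : (q : E × H).1 ∈ S
    · rw [Set.indicator_of_mem hq,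
        cutoff_of_mem (show (q : E × H).1 + -y ∈ K from sub_eq_add_neg (q : E × H).1 y ▸ hq.2)]
      simpa using hF q q.2
    · rw [Set.indicator_of_notMem hq]
      exact mul_nonneg hB (cutoff_decayWeight_nonneg _ _ _)
  obtain ⟨hsum, hbound⟩ := hM (-y, 0)
  have hsumS := (hsum.mul_left B).of_nonneg_of_le (fun q : L => hnonneg (q : E × H).1) hle
  refine ⟨summable_subtype_iff_indicator.2
    ((hinj.summable_iff (Function.support_subset_iff'.1 hsupp)).1 hsumS), ?_⟩
  rw [tsum_subtype, ← hinj.tsum_eq hsupp]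
  calc ∑' q : L, S.indicator F (q : E × H).1
      ≤ ∑' q : L, B * cutoff K (decayWeight s) ((q : E × H) + (-y, 0)) :=
        hsumS.tsum_le_tsum hle (hsum.mul_left B)
    _ = B * periodization L (cutoff K (decayWeight s)) (-y, 0) := tsum_mul_left
    _ ≤ B * M := mul_le_mul_of_nonneg_left hbound hB

end DirectSpace

theorem dense_comb_autocorrelation_general {E H : Type*}
    [NormedAddCommGroup E] [NormedSpace ℝ E] [FiniteDimensional ℝ E]
    [MeasurableSpace E] [BorelSpace E] (μ : Measure E) [μ.IsAddHaarMeasure]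
    [NormedAddCommGroup H] [NormedSpace ℝ H] [FiniteDimensional ℝ H]
    [MeasurableSpace H] [BorelSpace H] (ν : Measure H) [ν.IsAddHaarMeasure]
    (L : Submodule ℤ (E × H)) [DiscreteTopology L] [IsZLattice ℝ L]
    (hL : Dense (Prod.snd '' (L : Set (E × H))))
    (star : E → H) (hstar : ∀ p ∈ L, star p.1 = p.2)
    (f : H → ℂ) (hf : Continuous f) (C s : ℝ) (hs : (Module.finrank ℝ H : ℝ) < s)
    (hdecay : ∀ x, ‖x‖ ^ s * ‖f x‖ ≤ C) :
    (∀ g : E → ℂ, Continuous g → HasCompactSupport g →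
      Tendsto (fun R : ℝ => ∑' z : (Prod.fst '' (L : Set (E × H)) : Set E),
          finiteAutocorr L μ star f R z * g z) atTop
        (𝓝 (∑' z : (Prod.fst '' (L : Set (E × H)) : Set E),
          (ZLattice.covolume L (μ.prod ν))⁻¹ • selfCorrelation ν f (star z) * g z))) ∧
    (∀ K : Set E, IsBounded K → ∃ B : ℝ, ∀ y : E,
      (Summable fun z : (Prod.fst '' (L : Set (E × H)) ∩ {w | w - y ∈ K} : Set E) =>
        ‖(ZLattice.covolume L (μ.prod ν))⁻¹ • selfCorrelation ν f (star z)‖) ∧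
      ∑' z : (Prod.fst '' (L : Set (E × H)) ∩ {w | w - y ∈ K} : Set E),
        ‖(ZLattice.covolume L (μ.prod ν))⁻¹ • selfCorrelation ν f (star z)‖ ≤ B) ∧
    (∀ g : E → ℂ, Continuous g → HasCompactSupport g →
      0 ≤ ∑' z : (Prod.fst '' (L : Set (E × H)) : Set E),
        (ZLattice.covolume L (μ.prod ν))⁻¹ • selfCorrelation ν f (star z) *
          selfCorrelation μ g z) := by
  obtain ⟨C', hC', hfC⟩ :=
    exists_norm_le_mul_decayWeight ((Nat.cast_nonneg _).trans hs.le) hf hdecay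
  set η : H → ℂ := fun v => (ZLattice.covolume L (μ.prod ν))⁻¹ • selfCorrelation ν f v
  have hlim (g : E → ℂ) : ∑' z : (Prod.fst '' (L : Set (E × H)) : Set E), η (star z) * g z =
      ∑' p : L, η (p : E × H).2 * g (p : E × H).1 := by
    rw [tsum_image_fst_eq hstar fun z => η (star z) * g z]
    exact tsum_congr fun p => by rw [hstar p p.2]
  refine ⟨fun g hg hgc => ?_, fun K hK => ?_, fun g hg hgc => ?_⟩
  · rw [hlim]
    refine (tendsto_tsum_latticeAutocorr_mul L μ ν hL hs hC' hf hfC hg hgc).congr fun R => ?_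
    rw [tsum_image_fst_eq hstar fun z => finiteAutocorr L μ star f R z * g z]
    exact tsum_congr fun p => by rw [finiteAutocorr_fst μ hstar]
  · obtain ⟨B, hB, hη_le⟩ :=
      exists_norm_covolume_inv_smul_selfCorrelation_le L μ ν hL hs hC' hf hfC
    exact exists_forall_summable_and_tsum_le_of_le_decayWeight hs hstar hB
      (fun z => norm_nonneg (η (star z))) (fun p hp => by rw [hstar p hp]; exact hη_le p.2) hK
  · rw [hlim]
    exact tsum_covolume_inv_smul_selfCorrelation_mul_selfCorrelation_nonneg L μ ν hL hs hC' hf hfC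
      hg hgc

end

/-- the finite autocorrelations γ_ω^{(n)} = ∑_{z∈L} η_n(z) δ_z of the
dense Dirac comb converge vaguely to the unique autocorrelation
γ_ω = ∑_{z∈L} η(z) δ_z (a pure point measure by this very form), which is
translation bounded and positive definite. -/
theorem dense_comb_autocorrelation (d m : ℕ)
    (L : Submodule ℤ (EuclideanSpace ℝ (Fin d) × EuclideanSpace ℝ (Fin m)))
    [DiscreteTopology L] [IsZLattice ℝ L]
    (hinj1 : Set.InjOn Prod.fst (L : Set (EuclideanSpace ℝ (Fin d) × EuclideanSpace ℝ (Fin m))))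
    (hdense1 : Dense (physL d m L))
    (hinj2 : Set.InjOn Prod.snd (L : Set (EuclideanSpace ℝ (Fin d) × EuclideanSpace ℝ (Fin m))))
    (hdense2 : Dense (Prod.snd '' (L : Set (EuclideanSpace ℝ (Fin d) × EuclideanSpace ℝ (Fin m)))))
    (star : EuclideanSpace ℝ (Fin d) → EuclideanSpace ℝ (Fin m))
    (hstar : ∀ p ∈ L, star (Prod.fst p) = Prod.snd p)
    (f : EuclideanSpace ℝ (Fin m) → ℂ) (hf : Continuous f)
    (C α : ℝ) (hC : 0 < C) (hα : 0 < α)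
    (hdecay : ∀ x : EuclideanSpace ℝ (Fin m), ‖x‖ ^ ((m : ℝ) + 1 + α) * ‖f x‖ ≤ C) :
    -- vague convergence γ_ω^{(n)} → γ_ω = ∑_{z ∈ L} η(z) δ_z
    (∀ g : EuclideanSpace ℝ (Fin d) → ℂ, Continuous g → HasCompactSupport g →
      Filter.Tendsto
        (fun n : ℕ => ∑' z : physL d m L,
          etaN d m L star f n (z : EuclideanSpace ℝ (Fin d)) * g (z : EuclideanSpace ℝ (Fin d)))
        Filter.atTop
        (nhds (∑' z : physL d m L,
          etaLim d m L star f (z : EuclideanSpace ℝ (Fin d)) * g (z : EuclideanSpace ℝ (Fin d))))) ∧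
    -- γ_ω is translation bounded
    (∀ K : Set (EuclideanSpace ℝ (Fin d)), IsCompact K → ∃ B : ℝ,
      ∀ y : EuclideanSpace ℝ (Fin d),
        (Summable fun z : ((physL d m L ∩ {w | w - y ∈ K} : Set (EuclideanSpace ℝ (Fin d)))) =>
          ‖etaLim d m L star f (z : EuclideanSpace ℝ (Fin d))‖) ∧
        (∑' z : ((physL d m L ∩ {w | w - y ∈ K} : Set (EuclideanSpace ℝ (Fin d)))),
          ‖etaLim d m L star f (z : EuclideanSpace ℝ (Fin d))‖) ≤ B) ∧
    -- γ_ω is positive definite: γ_ω(g ∗ g̃) ≥ 0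
    (∀ g : EuclideanSpace ℝ (Fin d) → ℂ, Continuous g → HasCompactSupport g →
      ((∑' z : physL d m L, etaLim d m L star f (z : EuclideanSpace ℝ (Fin d)) *
          ∫ t, g t * (starRingEnd ℂ) (g (t - (z : EuclideanSpace ℝ (Fin d))))).im = 0 ∧
      0 ≤ (∑' z : physL d m L, etaLim d m L star f (z : EuclideanSpace ℝ (Fin d)) *
          ∫ t, g t * (starRingEnd ℂ) (g (t - (z : EuclideanSpace ℝ (Fin d))))).re)) := by
  have hs : (Module.finrank ℝ (EuclideanSpace ℝ (Fin m)) : ℝ) < m + 1 + α := by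
    rw [finrank_euclideanSpace_fin]
    linarith
  obtain ⟨hvague, hbounded, hpos⟩ :=
    dense_comb_autocorrelation_general volume volume L hdense2 star hstar f hf C _ hs hdecay
  refine ⟨fun g hg hgc => (hvague g hg hgc).comp tendsto_natCast_atTop_atTop,
    fun K hK => hbounded K hK.isBounded, fun g hg hgc => ?_⟩
  obtain ⟨hre, him⟩ := Complex.nonneg_iff.1 (hpos g hg hgc)
  exact ⟨him.symm, hre⟩
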